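/- Fix 0 < r < 1 and let H be a complex Hilbert space. For an invertible bounded linear operator J on H, the following are equivalent: (i) J ∈ 𝒫𝔸_r[H], i.e., there exist orthogonal projections P₊ and P₋ on H with P₊ + P₋ = I and a unitary U on H with P₋ U P₊ = 0 such that J = U (r P₊ + r⁻¹ P₋); (ii) (r⁻² + r²)I − J*J − J⁻*J⁻¹ = −((r⁻² + r²)I − JJ* − J⁻¹J⁻*) and the operator (1/(r⁻² − r²)) ((r⁻² + r²)I − J*J − J⁻*J⁻¹) is an orthogonal projection. -/

import Mathlib

open ContinuousLinearMap

noncomputable section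

/-- `P` is an orthogonal projection: self-adjoint and idempotent. -/
def IsOrthProj {H : Type*} [NormedAddCommGroup H] [InnerProductSpace ℂ H] [CompleteSpace H]
    (P : H →L[ℂ] H) : Prop :=
  IsSelfAdjoint P ∧ P * P = P

/-- Membership in `𝒫𝔸_r`: `J = U (r P₊ + r⁻¹ P₋)` with `P₊, P₋` complementary orthogonal
projections and `U` a unitary that is block upper triangular (`P₋ U P₊ = 0`). -/
def memPAscript (r : ℝ) {H : Type*} [NormedAddCommGroup H] [InnerProductSpace ℂ H]
    [CompleteSpace H] (J : H →L[ℂ] H) : Prop :=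
  ∃ Pp Pm U : H →L[ℂ] H, IsOrthProj Pp ∧ IsOrthProj Pm ∧ Pp + Pm = 1 ∧
    adjoint U * U = 1 ∧ U * adjoint U = 1 ∧ Pm * U * Pp = 0 ∧
    J = U * ((r : ℂ) • Pp + (r : ℂ)⁻¹ • Pm)

/-! If `J = U D` with `D = diag(r, r⁻¹)` relative to `p`, then `J*J = D²` and `J⁻*J⁻¹ = U D⁻² U*`,
so `r⁻² + r² - J*J - J⁻*J⁻¹ = (r⁻² - r²)(p - UpU*)`. Exchanging `J` and `J*` changes the sign, and
`p - UpU*` is a projection exactly when `(1 - p)Up = 0`.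

Conversely, put `s = r⁻² + r²` and suppose that `J*J + J⁻*J⁻¹ ≤ s` (otherwise exchange `J` and
`J*`). Then `m + m⁻¹ ≤ s` for `m = ‖J‖²` and for `m = ‖J⁻¹‖²`. With `t` the larger of these two
numbers, `(t - x)(t - x⁻¹) ≥ 0` gives `x + x⁻¹ ≤ t + t⁻¹ ≤ s` for `x = J*J` and for `x = JJ*`. The
first equation of (ii) says that these two left sides add up to `2s`, so both are equal to `s`.
Hence `(x - r²)(x - r⁻²) = 0` for `x = J*J`, that is, `J*J = D²` for some `p`, and `U = J D⁻¹` is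
unitary. -/

/-- The element with block form `diag(a, b)` relative to the decomposition `1 = p + (1 - p)`. -/
def projDiag {R A : Type*} [CommRing R] [Ring A] [Algebra R A] (p : A) (a b : R) : A :=
  a • p + b • (1 - p)

section ProjDiag

variable {R A B : Type*} [CommRing R] [Ring A] [Algebra R A] [Ring B] [Algebra R B] {p : A}

lemma projDiag_self (p : A) (a : R) : projDiag p a a = a • 1 := by
  rw [projDiag, ← smul_add, add_sub_cancel]

lemma projDiag_add_projDiag_swap (p : A) (a b : R) :
    projDiag p a b + projDiag p b a = (a + b) • 1 := by
  simp only [projDiag]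
  module

lemma projDiag_sub_projDiag (p q : A) (a b : R) :
    projDiag p a b - projDiag q a b = (a - b) • (p - q) := by
  simp only [projDiag]
  module

lemma projDiag_mul_projDiag (hp : IsIdempotentElem p) (a b c d : R) :
    projDiag p a b * projDiag p c d = projDiag p (a * c) (b * d) := by
  simp only [projDiag, mul_add, add_mul, smul_mul_smul_comm, hp.eq, hp.one_sub.eq,
    hp.mul_one_sub_self, hp.one_sub_mul_self, smul_zero, add_zero, zero_add]

lemma star_projDiag [StarRing R] [TrivialStar R] [StarRing A] [StarModule R A]
    (hp : IsSelfAdjoint p) (a b : R) : star (projDiag p a b) = projDiag p a b := by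
  simp only [projDiag, star_add, star_smul, star_sub, star_one, star_trivial, hp.star_eq]

lemma map_projDiag {F : Type*} [FunLike F A B] [AlgHomClass F R A B] (f : F) (p : A) (a b : R) :
    f (projDiag p a b) = projDiag (f p) a b := by
  simp only [projDiag, map_add, map_sub, map_smul, map_one]

/-- `projDiag p a b` as a unit, when `b = a⁻¹`. -/
def projDiagUnit (hp : IsIdempotentElem p) {a b : R} (hab : a * b = 1) : Aˣ where
  val := projDiag p a b
  inv := projDiag p b a
  val_inv := by
    rw [projDiag_mul_projDiag hp, mul_comm b a, hab, projDiag_self, one_smul]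
  inv_val := by
    rw [projDiag_mul_projDiag hp, mul_comm b a, hab, projDiag_self, one_smul]

lemma exists_eq_projDiag {𝕜 : Type*} [Field 𝕜] [StarRing 𝕜] [TrivialStar 𝕜] [Algebra 𝕜 A]
    [StarRing A] [StarModule 𝕜 A] {x : A} (hx : IsSelfAdjoint x) {a b : 𝕜} (hab : a ≠ b)
    (hroot : (x - a • 1) * (x - b • 1) = 0) :
    ∃ p : A, IsStarProjection p ∧ x = projDiag p a b := by
  have hab' : a - b ≠ 0 := sub_ne_zero.2 hab
  have hsq : (x - b • 1) * (x - b • 1) = (a - b) • (x - b • 1) := by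
    calc (x - b • 1) * (x - b • 1)
        = (x - a • 1) * (x - b • 1) + (a - b) • (x - b • 1) := by
          simp only [sub_mul, mul_sub, smul_mul_assoc, one_mul]
          module
      _ = (a - b) • (x - b • 1) := by rw [hroot, zero_add]
  refine ⟨(a - b)⁻¹ • (x - b • 1), ⟨?_, ?_⟩, ?_⟩
  · rw [IsIdempotentElem, smul_mul_smul_comm, hsq, smul_smul, inv_mul_cancel_right₀ hab']
  · exact (IsSelfAdjoint.all _).smul (hx.sub ((IsSelfAdjoint.all b).smul (.one A)))
  · calc x = (a - b) • ((a - b)⁻¹ • (x - b • 1)) + b • 1 := by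
          rw [smul_inv_smul₀ hab', sub_add_cancel]
      _ = projDiag ((a - b)⁻¹ • (x - b • 1)) a b := by
          rw [projDiag]
          module

end ProjDiag

/-- The element `s - u* u - u⁻* u⁻¹`. For `s = r⁻² + r²` it is `r⁻² - r²` times the value
`(1 / k_r)(u, u*)` of the hereditary calculus, and replacing `u` by `star u` gives the same multiple
of `(1 / k_r)(u*, u)`. -/
def kernelDefect {R A : Type*} [CommRing R] [Ring A] [StarRing A] [Algebra R A]
    (s : R) (u : Aˣ) : A :=
  s • 1 - star (u : A) * u - star (↑u⁻¹ : A) * ↑u⁻¹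

lemma kernelDefect_inv {R A : Type*} [CommRing R] [Ring A] [StarRing A] [Algebra R A] (s : R)
    (u : Aˣ) : kernelDefect s u⁻¹ = kernelDefect s u := by
  rw [kernelDefect, kernelDefect, inv_inv, sub_right_comm]

/-- The class `𝒫𝔸_r` in a star algebra, with `p` and `1 - p` as the two complementary
projections. -/
def MemScriptPA {𝕜 A : Type*} [Field 𝕜] [Ring A] [StarRing A] [Algebra 𝕜 A] (r : 𝕜) (x : A) :
    Prop :=
  ∃ (p : A) (U : unitary A), IsStarProjection p ∧ (1 - p) * U * p = 0 ∧ x = U * projDiag p r r⁻¹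

open Unitary in
lemma one_sub_mul_unitary_mul_eq_zero_iff {R A : Type*} [CommRing R] [Ring A] [StarRing A]
    [Algebra R A] [IsAddTorsionFree A] {p : A} (hp : IsStarProjection p) (U : unitary A) :
    (1 - p) * U * p = 0 ↔ IsStarProjection (p - conjStarAlgAut R A U p) := by
  rw [IsStarProjection.sub_iff_mul_eq_right (hp.map (conjStarAlgAut R A U)) hp,
    conjStarAlgAut_apply, ← (isUnit_coe (U := star U)).mul_left_eq_zero, coe_star]
  simp only [sub_mul, one_mul, mul_assoc]
  rw [sub_eq_zero, eq_comm]

section Polar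

variable {R A : Type*} [CommRing R] [StarRing R] [TrivialStar R] [Ring A] [StarRing A]
  [Algebra R A] [StarModule R A] {p : A} {a b : R}

open Unitary in
lemma kernelDefect_eq_smul_sub (hp : IsStarProjection p) (hab : a * b = 1) (U : unitary A) {u : Aˣ}
    (hu : (u : A) = U * projDiag p a b) :
    kernelDefect (b ^ 2 + a ^ 2) u = (b ^ 2 - a ^ 2) • (p - conjStarAlgAut R A U p) := by
  have hu_inv : (↑u⁻¹ : A) = projDiag p b a * star (U : A) := by
    have hunit : u = Unitary.toUnits U * projDiagUnit hp.isIdempotentElem hab := Units.ext hu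
    rw [hunit, mul_inv_rev]
    rfl
  have hsq : star (u : A) * u = projDiag p (a ^ 2) (b ^ 2) := by
    rw [hu, star_mul, star_projDiag hp.isSelfAdjoint, mul_assoc, ← mul_assoc (star (U : A)),
      coe_star_mul_self, one_mul, projDiag_mul_projDiag hp.isIdempotentElem, ← sq, ← sq]
  have hsq_inv : star (↑u⁻¹ : A) * ↑u⁻¹ = projDiag (conjStarAlgAut R A U p) (b ^ 2) (a ^ 2) := by
    rw [hu_inv, star_mul, star_star, star_projDiag hp.isSelfAdjoint, ← map_projDiag,
      conjStarAlgAut_apply, sq, sq, ← projDiag_mul_projDiag hp.isIdempotentElem]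
    simp only [mul_assoc]
  rw [kernelDefect, hsq, hsq_inv, ← projDiag_add_projDiag_swap p, add_sub_cancel_right,
    projDiag_sub_projDiag]

open Unitary in
lemma kernelDefect_star_eq_smul_sub (hp : IsStarProjection p) (hab : a * b = 1) (U : unitary A)
    {u : Aˣ} (hu : (u : A) = U * projDiag p a b) :
    kernelDefect (b ^ 2 + a ^ 2) (star u) = (b ^ 2 - a ^ 2) • (conjStarAlgAut R A U p - p) := by
  have hstar : ((star u : Aˣ) : A) =
      (star U : unitary A) * projDiag (conjStarAlgAut R A U p) a b := by
    rw [Units.coe_star, hu, star_mul, star_projDiag hp.isSelfAdjoint, ← map_projDiag,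
      conjStarAlgAut_apply, coe_star, ← mul_assoc, ← mul_assoc, coe_star_mul_self, one_mul]
  rw [kernelDefect_eq_smul_sub (hp.map (conjStarAlgAut R A U)) hab (star U) hstar,
    ← conjStarAlgAut_mul_apply, star_mul_self, map_one]
  rfl

end Polar

lemma exists_eq_unitary_mul_projDiag {𝕜 A : Type*} [Field 𝕜] [StarRing 𝕜] [TrivialStar 𝕜]
    [Ring A] [StarRing A] [Algebra 𝕜 A] [StarModule 𝕜 A] {a b : 𝕜} (hab : a * b = 1)
    (hsq : a ^ 2 ≠ b ^ 2) {u : Aˣ}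
    (hu : (↑(star u * u) : A) + ↑(star u * u)⁻¹ = (b ^ 2 + a ^ 2) • 1) :
    ∃ (p : A) (U : unitary A), IsStarProjection p ∧ (u : A) = U * projDiag p a b := by
  obtain ⟨p, hp, hup⟩ : ∃ p : A, IsStarProjection p ∧
      (↑(star u * u) : A) = projDiag p (a ^ 2) (b ^ 2) := by
    refine exists_eq_projDiag (.star_mul_self (u : A)) hsq ?_
    set x := star u * u
    calc ((x : A) - a ^ 2 • 1) * ((x : A) - b ^ 2 • 1)
        = (x : A) * (x : A) - (b ^ 2 + a ^ 2) • (x : A) + (a * b) ^ 2 • 1 := by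
          simp only [sub_mul, mul_sub, smul_mul_assoc, mul_smul_comm, one_mul, mul_one]
          module
      _ = (x : A) * (x : A) - (x : A) * (x + ↑x⁻¹) + 1 := by
          rw [hu, hab, one_pow, one_smul, mul_smul_comm, mul_one]
      _ = 0 := by rw [mul_add, x.mul_inv, sub_add_cancel_left, neg_add_cancel]
  let d : Aˣ := projDiagUnit hp.isIdempotentElem hab
  have hd : star d * d = star u * u := by
    refine Units.ext ?_
    rw [hup, sq, sq, ← projDiag_mul_projDiag hp.isIdempotentElem, Units.val_mul, Units.coe_star]
    exact congrArg (· * _) (star_projDiag hp.isSelfAdjoint a b)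
  exact ⟨p, ⟨u * ↑d⁻¹, (Units.mul_inv_mem_unitary u d).2 hd.symm⟩, hp,
    (Units.inv_mul_cancel_right (u : A) d).symm⟩

section CStarAlgebra

variable {A : Type*} [CStarAlgebra A] [PartialOrder A] [StarOrderedRing A] {u : Aˣ} {s : ℝ}

lemma add_inv_le_smul_one {x : Aˣ} {t : ℝ} (ht : 0 < t) (hx : (x : A) ≤ t • 1)
    (hx_inv : (↑x⁻¹ : A) ≤ t • 1) : (x : A) + ↑x⁻¹ ≤ (t + t⁻¹) • 1 := by
  have hcomm : Commute (t • 1 - (x : A)) (t • 1 - ↑x⁻¹) := by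
    simp only [Commute, SemiconjBy, sub_mul, mul_sub, smul_mul_assoc, mul_smul_comm, one_mul,
      mul_one, x.mul_inv, x.inv_mul]
    module
  have hprod : 0 ≤ t⁻¹ • ((t • 1 - (x : A)) * (t • 1 - ↑x⁻¹)) :=
    smul_nonneg (inv_nonneg.2 ht.le) (hcomm.mul_nonneg (sub_nonneg.2 hx) (sub_nonneg.2 hx_inv))
  refine sub_nonneg.1 (hprod.trans_eq ?_)
  simp only [sub_mul, mul_sub, smul_mul_assoc, mul_smul_comm, one_mul, mul_one, x.mul_inv]
  match_scalars <;> field_simp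
  ring

lemma inv_norm_sq_smul_one_le (u : Aˣ) :
    (‖(u : A)‖ ^ 2)⁻¹ • (1 : A) ≤ star (↑u⁻¹ : A) * ↑u⁻¹ := by
  nontriviality A
  have hpos : 0 < ‖(u : A)‖ ^ 2 := by
    have := norm_pos_iff.2 u.ne_zero
    positivity
  rw [inv_smul_le_iff_of_pos hpos]
  calc (1 : A) = star (↑u⁻¹ : A) * (star (u : A) * u) * ↑u⁻¹ := by
        rw [← mul_assoc, ← star_mul, u.mul_inv, star_one, one_mul, u.mul_inv]
    _ ≤ star (↑u⁻¹ : A) * algebraMap ℝ A (‖(u : A)‖ ^ 2) * ↑u⁻¹ :=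
        star_left_conjugate_le_conjugate CStarAlgebra.star_mul_le_algebraMap_norm_sq _
    _ = ‖(u : A)‖ ^ 2 • (star (↑u⁻¹ : A) * ↑u⁻¹) := by
        rw [Algebra.algebraMap_eq_smul_one, mul_smul_comm, mul_one, smul_mul_assoc]

lemma norm_sq_add_inv_le [Nontrivial A] (h : 0 ≤ kernelDefect s u) :
    ‖(u : A)‖ ^ 2 + (‖(u : A)‖ ^ 2)⁻¹ ≤ s := by
  have hle : star (u : A) * u ≤ algebraMap ℝ A (s - (‖(u : A)‖ ^ 2)⁻¹) := by
    rw [Algebra.algebraMap_eq_smul_one, sub_smul]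
    rw [kernelDefect, sub_nonneg, le_sub_comm] at h
    exact h.trans (sub_le_sub_left (inv_norm_sq_smul_one_le u) _)
  have hnorm : ‖star (u : A) * u‖ ≤ s - (‖(u : A)‖ ^ 2)⁻¹ :=
    (le_algebraMap_iff_spectrum_le (.star_mul_self _)).1 hle _
      (CStarAlgebra.norm_mem_spectrum_of_nonneg (star_mul_self_nonneg _))
  rw [CStarRing.norm_star_mul_self, ← sq] at hnorm
  exact le_sub_iff_add_le.1 hnorm

lemma star_mul_self_add_inv_le (h : 0 ≤ kernelDefect s u) :
    (↑(star u * u) : A) + ↑(star u * u)⁻¹ ≤ s • 1 := by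
  nontriviality A
  set t : ℝ := max (‖(u : A)‖ ^ 2) (‖(↑u⁻¹ : A)‖ ^ 2) with ht_def
  have ht_pos : 0 < t := by
    have := norm_pos_iff.2 u.ne_zero
    exact lt_max_of_lt_left (by positivity)
  have hts : t + t⁻¹ ≤ s := by
    rcases max_choice (‖(u : A)‖ ^ 2) (‖(↑u⁻¹ : A)‖ ^ 2) with ht | ht
    · rw [ht_def, ht]
      exact norm_sq_add_inv_le h
    · rw [ht_def, ht]
      exact norm_sq_add_inv_le ((kernelDefect_inv s u).symm ▸ h)
  have hle : (↑(star u * u) : A) ≤ t • 1 := by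
    rw [← Algebra.algebraMap_eq_smul_one]
    exact CStarAlgebra.star_mul_le_algebraMap_norm_sq.trans (algebraMap_mono A (le_max_left _ _))
  have hle_inv : (↑(star u * u)⁻¹ : A) ≤ t • 1 := by
    rw [← Algebra.algebraMap_eq_smul_one, mul_inv_rev, Units.val_mul, Units.coe_star_inv]
    exact CStarAlgebra.mul_star_le_algebraMap_norm_sq.trans (algebraMap_mono A (le_max_right _ _))
  exact (add_inv_le_smul_one ht_pos hle hle_inv).trans
    (smul_le_smul_of_nonneg_right hts zero_le_one)

lemma self_mul_star_add_inv_le (h : 0 ≤ kernelDefect s u) :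
    (↑(u * star u) : A) + ↑(u * star u)⁻¹ ≤ s • 1 := by
  have := star_mul_self_add_inv_le ((kernelDefect_inv s u).symm ▸ h)
  rwa [star_inv, ← mul_inv_rev, inv_inv, add_comm] at this

lemma star_mul_self_add_inv_eq (hskew : kernelDefect s u = -kernelDefect s (star u))
    (h : 0 ≤ kernelDefect s u ∨ 0 ≤ kernelDefect s (star u)) :
    (↑(star u * u) : A) + ↑(star u * u)⁻¹ = s • 1 := by
  have hle : (↑(star u * u) : A) + ↑(star u * u)⁻¹ ≤ s • 1 ∧
      (↑(u * star u) : A) + ↑(u * star u)⁻¹ ≤ s • 1 := by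
    rcases h with h | h
    · exact ⟨star_mul_self_add_inv_le h, self_mul_star_add_inv_le h⟩
    · have hself := self_mul_star_add_inv_le h
      have hstar := star_mul_self_add_inv_le h
      rw [star_star] at hself hstar
      exact ⟨hself, hstar⟩
  have hsum : (↑(star u * u) : A) + ↑(star u * u)⁻¹ + (↑(u * star u) + ↑(u * star u)⁻¹) =
      s • 1 + s • 1 := by
    rw [← sub_eq_zero, ← neg_eq_zero, ← add_eq_zero_iff_eq_neg.2 hskew]
    simp only [kernelDefect, mul_inv_rev, Units.val_mul, Units.coe_star, Units.coe_star_inv,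
      star_star]
    abel
  exact ((add_eq_add_iff_eq_and_eq hle.1 hle.2).1 hsum).1

end CStarAlgebra

section LinearOrderedField

variable {𝕜 : Type*} [Field 𝕜] [LinearOrder 𝕜] [IsStrictOrderedRing 𝕜]

lemma sq_ne_inv_sq {r : 𝕜} (hr0 : r ≠ 0) (hr1 : |r| ≠ 1) : r ^ 2 ≠ r⁻¹ ^ 2 := by
  intro h
  have hpow : |r| ^ 4 = 1 := by
    calc |r| ^ 4 = r ^ 2 * r ^ 2 := by rw [Even.pow_abs (by decide), ← pow_add]
      _ = r ^ 2 * r⁻¹ ^ 2 := by rw [← h]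
      _ = 1 := by rw [← mul_pow, mul_inv_cancel₀ hr0, one_pow]
  exact hr1 ((pow_eq_one_iff_of_nonneg (abs_nonneg r) four_ne_zero).1 hpow)

lemma nonneg_or_neg_nonneg_of_smul_nonneg {M : Type*} [AddCommGroup M] [PartialOrder M]
    [Module 𝕜 M] [PosSMulMono 𝕜 M] {c : 𝕜} (hc : c ≠ 0) {x : M}
    (hx : 0 ≤ c • x) : 0 ≤ x ∨ 0 ≤ -x := by
  rcases hc.lt_or_gt with hneg | hpos
  · right
    rw [← neg_smul_neg] at hx
    exact (smul_nonneg_iff_nonneg_of_pos_left (neg_pos.2 hneg)).1 hx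
  · exact .inl ((smul_nonneg_iff_nonneg_of_pos_left hpos).1 hx)

end LinearOrderedField

theorem pa_script_characterization_general {A : Type*} [CStarAlgebra A] {r : ℝ} (hr0 : r ≠ 0)
    (hr1 : |r| ≠ 1) (u : Aˣ) :
    MemScriptPA r (u : A) ↔
      kernelDefect (r⁻¹ ^ 2 + r ^ 2) u = -kernelDefect (r⁻¹ ^ 2 + r ^ 2) (star u) ∧
        IsStarProjection ((r⁻¹ ^ 2 - r ^ 2)⁻¹ • kernelDefect (r⁻¹ ^ 2 + r ^ 2) u) := by
  let _ := CStarAlgebra.spectralOrder A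
  let _ := CStarAlgebra.spectralOrderedRing A
  have _ : IsAddTorsionFree A := .of_isTorsionFree ℝ A
  have hr : r * r⁻¹ = 1 := mul_inv_cancel₀ hr0
  have hsq : r ^ 2 ≠ r⁻¹ ^ 2 := sq_ne_inv_sq hr0 hr1
  have hgap : r⁻¹ ^ 2 - r ^ 2 ≠ 0 := sub_ne_zero.2 hsq.symm
  constructor
  · rintro ⟨p, U, hp, hpU, hu⟩
    rw [kernelDefect_eq_smul_sub hp hr U hu, kernelDefect_star_eq_smul_sub hp hr U hu, ← smul_neg,
      neg_sub, inv_smul_smul₀ hgap]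
    exact ⟨rfl, (one_sub_mul_unitary_mul_eq_zero_iff hp U).1 hpU⟩
  · rintro ⟨hskew, hproj⟩
    have hsign := nonneg_or_neg_nonneg_of_smul_nonneg (inv_ne_zero hgap) hproj.nonneg
    nth_rewrite 2 [hskew] at hsign
    rw [neg_neg] at hsign
    obtain ⟨p, U, hp, hu⟩ :=
      exists_eq_unitary_mul_projDiag hr hsq (star_mul_self_add_inv_eq hskew hsign)
    rw [kernelDefect_eq_smul_sub hp hr U hu, inv_smul_smul₀ hgap] at hproj
    exact ⟨p, U, hp, (one_sub_mul_unitary_mul_eq_zero_iff hp U).2 hproj, hu⟩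

section Operators

variable {H : Type*} [NormedAddCommGroup H] [InnerProductSpace ℂ H] [CompleteSpace H]

lemma isOrthProj_iff_isStarProjection {P : H →L[ℂ] H} : IsOrthProj P ↔ IsStarProjection P := by
  rw [isStarProjection_iff, and_comm]
  rfl

lemma memPAscript_iff_memScriptPA {r : ℝ} {J : H →L[ℂ] H} :
    memPAscript r J ↔ MemScriptPA r J := by
  simp only [memPAscript, MemScriptPA, projDiag, isOrthProj_iff_isStarProjection,
    ← Complex.ofReal_inv, Complex.coe_smul, ← star_eq_adjoint]
  constructor
  · rintro ⟨p, q, U, hp, -, hpq, hU, hU', hqUp, hJ⟩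
    obtain rfl : q = 1 - p := eq_sub_of_add_eq' hpq
    exact ⟨p, ⟨U, hU, hU'⟩, hp, hqUp, hJ⟩
  · rintro ⟨p, ⟨U, hU, hU'⟩, hp, hpU, hJ⟩
    exact ⟨p, 1 - p, U, hp, hp.one_sub, add_sub_cancel p 1, hU, hU', hpU, hJ⟩

end Operators

/-- An invertible operator `J` lies in `𝒫𝔸_r` if and only if
`(r⁻² + r²)I − J*J − J⁻*J⁻¹ = −((r⁻² + r²)I − JJ* − J⁻¹J⁻*)` and
`(1/(r⁻² − r²)) ((r⁻² + r²)I − J*J − J⁻*J⁻¹)` is an orthogonal projection. -/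
theorem pa_script_characterization {H : Type*}
    [NormedAddCommGroup H] [InnerProductSpace ℂ H] [CompleteSpace H]
    (r : ℝ) (hr0 : 0 < r) (hr1 : r < 1)
    (J J' : H →L[ℂ] H) (hJinv : J * J' = 1) (hJinv' : J' * J = 1) :
    memPAscript r J ↔
      ((((r⁻¹ ^ 2 + r ^ 2 : ℝ) : ℂ) • (1 : H →L[ℂ] H) - adjoint J * J - adjoint J' * J'
          = -(((r⁻¹ ^ 2 + r ^ 2 : ℝ) : ℂ) • (1 : H →L[ℂ] H) - J * adjoint J
              - J' * adjoint J')) ∧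
        IsOrthProj ((((r⁻¹ ^ 2 - r ^ 2 : ℝ)⁻¹ : ℝ) : ℂ) •
          (((r⁻¹ ^ 2 + r ^ 2 : ℝ) : ℂ) • (1 : H →L[ℂ] H) - adjoint J * J
            - adjoint J' * J'))) := by
  simpa only [← memPAscript_iff_memScriptPA, isOrthProj_iff_isStarProjection, kernelDefect,
    Units.coe_star, Units.coe_star_inv, Units.inv_mk, star_eq_adjoint, adjoint_adjoint,
    Complex.coe_smul] using pa_script_characterization_general hr0.ne'
      (abs_lt.2 ⟨by linarith, hr1⟩).ne (⟨J, J', hJinv, hJinv'⟩ : (H →L[ℂ] H)ˣ)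

end
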